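/- Let σ, σ̂₁,…,σ̂ₘ be n-rankings. Suppose that for every pair i < j in {1,…,n}, the number of indices k ∈ {1,…,m} for which σ̂ₖ is concordant with σ on the pair (i,j) is strictly greater than m/2. Then σ is the unique minimizer over all n-rankings of the Kemeny objective τ ↦ Σₖ₌₁ᵐ d_κ(σ̂ₖ, τ); that is, σ is the unique Kemeny–Young optimal ranking of σ̂₁,…,σ̂ₘ. -/

import Mathlib

/-! Exchanging the order of summation, the Kemeny objective of `τ` is the sum over pairs `i < j`
of the number of rankings discordant with `τ` on `(i, j)`. On a pair where `τ` agrees with `σ` this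
number is the same for `τ` and `σ`; on a pair where they disagree, the rankings discordant with `τ`
are exactly those concordant with `σ`, a strict majority. So `σ` minimizes every term of the sum,
and strictly beats any `τ` discordant with it on some pair (`discordCount_lt`). A ranking discordant
with `σ` on no pair equals `σ` (`eq_of_forall_not_discordant`). -/

/-- Two rankings `σ₁` and `σ₂` are *discordant* on the pair `(i, j)` if they order
`i` and `j` in opposite ways. -/
def Discordant {n : ℕ} (σ₁ σ₂ : Equiv.Perm (Fin n)) (i j : Fin n) : Prop :=
  (σ₁ i < σ₁ j ∧ σ₂ j < σ₂ i) ∨ (σ₁ j < σ₁ i ∧ σ₂ i < σ₂ j)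

instance {n : ℕ} (σ₁ σ₂ : Equiv.Perm (Fin n)) (i j : Fin n) :
    Decidable (Discordant σ₁ σ₂ i j) := by
  unfold Discordant; infer_instance

/-- The Kendall tau distance: the number of discordant pairs `i < j`. -/
def kendallDist {n : ℕ} (σ₁ σ₂ : Equiv.Perm (Fin n)) : ℕ :=
  (Finset.univ.filter
    (fun p : Fin n × Fin n => p.1 < p.2 ∧ Discordant σ₁ σ₂ p.1 p.2)).card

/-- The number of rankings among `σh` that are discordant with `τ` on the pair `(i, j)`. -/
def discordCount {n m : ℕ} (σh : Fin m → Equiv.Perm (Fin n)) (τ : Equiv.Perm (Fin n))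
    (i j : Fin n) : ℕ :=
  (Finset.univ.filter (fun k : Fin m => Discordant (σh k) τ i j)).card

/-- The Kemeny objective as a sum over pairs instead of over rankings. -/
lemma sum_kendallDist {n m : ℕ} (σh : Fin m → Equiv.Perm (Fin n)) (τ : Equiv.Perm (Fin n)) :
    ∑ k : Fin m, kendallDist (σh k) τ =
      ∑ p ∈ Finset.univ.filter (fun p : Fin n × Fin n => p.1 < p.2),
        discordCount σh τ p.1 p.2 := by
  simp only [kendallDist, discordCount, ← Finset.filter_filter,
    Finset.card_filter _ (Finset.filter _ _), Finset.card_filter _ Finset.univ]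
  exact Finset.sum_comm

lemma discordant_iff_of_not_discordant {n : ℕ} {σ τ : Equiv.Perm (Fin n)} {i j : Fin n}
    (hij : i < j) (h : ¬ Discordant σ τ i j) (ρ : Equiv.Perm (Fin n)) :
    Discordant ρ τ i j ↔ Discordant ρ σ i j := by
  have h1 : σ i ≠ σ j := σ.injective.ne hij.ne
  have h2 : τ i ≠ τ j := τ.injective.ne hij.ne
  unfold Discordant at *
  grind

lemma discordant_iff_of_discordant {n : ℕ} {σ τ : Equiv.Perm (Fin n)} {i j : Fin n}
    (hij : i < j) (h : Discordant σ τ i j) (ρ : Equiv.Perm (Fin n)) :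
    Discordant ρ τ i j ↔ ¬ Discordant ρ σ i j := by
  have h1 : ρ i ≠ ρ j := ρ.injective.ne hij.ne
  unfold Discordant at *
  grind

lemma discordCount_eq {n m : ℕ} {σ τ : Equiv.Perm (Fin n)} (σh : Fin m → Equiv.Perm (Fin n))
    {i j : Fin n} (hij : i < j) (h : ¬ Discordant σ τ i j) :
    discordCount σh τ i j = discordCount σh σ i j := by
  simp only [discordCount, discordant_iff_of_not_discordant hij h]

lemma discordCount_lt {n m : ℕ} {σ τ : Equiv.Perm (Fin n)} {σh : Fin m → Equiv.Perm (Fin n)}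
    {i j : Fin n} (hij : i < j) (h : Discordant σ τ i j)
    (hmaj : m < 2 * (Finset.univ.filter (fun k : Fin m => ¬ Discordant (σh k) σ i j)).card) :
    discordCount σh σ i j < discordCount σh τ i j := by
  have hsplit := Finset.card_filter_add_card_filter_not (s := (Finset.univ : Finset (Fin m)))
    (fun k => Discordant (σh k) σ i j)
  rw [Finset.card_univ, Fintype.card_fin] at hsplit
  simp only [discordCount, discordant_iff_of_discordant hij h]
  omega

/-- If no pair is discordant, `τ ∘ σ⁻¹` is a strictly increasing permutation of `Fin n`, and the
identity is the only one. -/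
lemma eq_of_forall_not_discordant {n : ℕ} {σ τ : Equiv.Perm (Fin n)}
    (h : ∀ i j : Fin n, i < j → ¬ Discordant σ τ i j) : τ = σ := by
  have hmono : StrictMono (τ ∘ σ.symm) := by
    intro a b hab
    have hne : σ.symm a ≠ σ.symm b := σ.symm.injective.ne hab.ne
    have hτ : τ (σ.symm a) ≠ τ (σ.symm b) := τ.injective.ne hne
    have h1 := h (σ.symm a) (σ.symm b)
    have h2 := h (σ.symm b) (σ.symm a)
    simp only [Discordant, Equiv.apply_symm_apply] at h1 h2
    simp only [Function.comp_apply]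
    grind
  have hid : τ ∘ σ.symm = id := hmono.eq_id
  ext x
  have := congrFun hid (σ x)
  simp_all

/-- If, for every pair `i < j`, a strict majority of the rankings `σh k` is concordant
with `σ` on `(i, j)`, then `σ` is the unique minimizer of the Kemeny objective
`τ ↦ ∑ k, kendallDist (σh k) τ`, i.e. the unique Kemeny–Young optimal ranking. -/
theorem majority_concordance_implies_unique_kemeny {n m : ℕ}
    (σ : Equiv.Perm (Fin n)) (σh : Fin m → Equiv.Perm (Fin n))
    (hmaj : ∀ i j : Fin n, i < j →
      m < 2 * (Finset.univ.filter
        (fun k : Fin m => ¬ Discordant (σh k) σ i j)).card) :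
    (∀ τ : Equiv.Perm (Fin n),
        ∑ k : Fin m, kendallDist (σh k) σ ≤ ∑ k : Fin m, kendallDist (σh k) τ) ∧
    (∀ τ : Equiv.Perm (Fin n),
        ∑ k : Fin m, kendallDist (σh k) τ ≤ ∑ k : Fin m, kendallDist (σh k) σ →
        τ = σ) := by
  have hle : ∀ τ : Equiv.Perm (Fin n),
      ∀ p ∈ Finset.univ.filter (fun p : Fin n × Fin n => p.1 < p.2),
        discordCount σh σ p.1 p.2 ≤ discordCount σh τ p.1 p.2 := by
    intro τ p hp
    have hlt : p.1 < p.2 := (Finset.mem_filter.1 hp).2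
    by_cases h : Discordant σ τ p.1 p.2
    · exact (discordCount_lt hlt h (hmaj _ _ hlt)).le
    · exact (discordCount_eq σh hlt h).ge
  simp only [sum_kendallDist]
  refine ⟨fun τ => Finset.sum_le_sum (hle τ), fun τ hτ => ?_⟩
  refine eq_of_forall_not_discordant fun i j hij h => hτ.not_gt ?_
  exact Finset.sum_lt_sum (hle τ)
    ⟨(i, j), Finset.mem_filter.2 ⟨Finset.mem_univ _, hij⟩, discordCount_lt hij h (hmaj i j hij)⟩
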